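/- arXiv:2006.04032 — 4 statements merged into one kernel-verified Lean document; each statement's English description precedes it below -/
import Mathlib

section
/- There is no injective group homomorphism from ℤ × ℤ into the free product ℤ ∗ (ℤ/2ℤ). -/
theorem aux_semi : ∃ A : Monoid.Coprod (Multiplicative ℤ) (Multiplicative (ZMod 2)) →*
    Multiplicative (ZMod 2), ∃ B : A.ker →* FreeGroup (Multiplicative (ZMod 2)), Function.Injective B := by
  let T := Multiplicative (ZMod 2)
  let G := Monoid.Coprod (Multiplicative ℤ) T
  let φ : T →* MulAut (FreeGroup T) :=
    { toFun := fun t => FreeGroup.freeGroupCongr (Equiv.mulLeft t)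
      map_one' := by ext x; simp
      map_mul' := by
        intro s t
        apply MulEquiv.toMonoidHom_injective
        ext x
        simp [mul_assoc] }
  let A : G →* FreeGroup T ⋊[φ] T :=
    Monoid.Coprod.lift (zpowersHom _ (SemidirectProduct.inl (FreeGroup.of 1))) SemidirectProduct.inr
  let a : G := Monoid.Coprod.inl (Multiplicative.ofAdd 1)
  let i : T →* G := Monoid.Coprod.inr
  let B : FreeGroup T ⋊[φ] T →* G :=
    SemidirectProduct.lift (FreeGroup.lift (fun t => i t * a * (i t)⁻¹)) i (by
      intro t
      ext x
      simp [φ, mul_assoc]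
      exact mul_inv_rev _ _)
  have h : B.comp A = MonoidHom.id _ := by
    ext <;> simp [A, B, a, i]
  have hA : Function.Injective A := by
    intro x y hxy
    have := congrArg B hxy
    have e : ∀ z, B (A z) = z := fun z => DFunLike.congr_fun h z
    rwa [e, e] at this
  refine ⟨SemidirectProduct.rightHom.comp A,
    { toFun := fun x => (A x.1).left, map_one' := by simp, map_mul' := ?_ }, ?_⟩
  · rintro ⟨x, hx⟩ ⟨y, hy⟩
    have hx' : (A x).right = 1 := hx
    simp [hx']
  · rintro ⟨x, hx⟩ ⟨y, hy⟩ hxy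
    have hx' : (A x).right = 1 := hx
    have hy' : (A y).right = 1 := hy
    apply Subtype.ext
    apply hA
    apply SemidirectProduct.ext
    · exact hxy
    · exact hx'.trans hy'.symm

theorem aux_free {α : Type} (f : (Multiplicative ℤ × Multiplicative ℤ) →* FreeGroup α)
    (hf : Function.Injective f) : False := by
  let Z2 := Multiplicative ℤ × Multiplicative ℤ
  have e : Z2 ≃* f.range := MonoidHom.ofInjective hf
  obtain ⟨ι, ⟨b⟩⟩ := (inferInstance : IsFreeGroup f.range)
  by_cases hs : Subsingleton ι
  · have hc : ∃ g : Z2, ∀ x : Z2, ∃ n : ℤ, g ^ n = x := by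
      have : IsCyclic (FreeGroup ι) := by
        rcases isEmpty_or_nonempty ι with h | ⟨⟨i⟩⟩
        · infer_instance
        · have : Unique ι := ⟨⟨i⟩, fun _ => Subsingleton.elim _ _⟩
          infer_instance
      obtain ⟨g, hg⟩ := this
      refine ⟨e.symm (b.repr.symm g), fun x => ?_⟩
      obtain ⟨n, hn⟩ := hg (b.repr (e x))
      refine ⟨n, ?_⟩
      simp only at hn
      rw [← map_zpow, ← map_zpow, hn]; simp
    obtain ⟨g, hg⟩ := hc
    exact not_isCyclic_prod_of_infinite_nontrivial (Multiplicative ℤ) (Multiplicative ℤ) ⟨⟨g, hg⟩⟩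
  · rw [not_subsingleton_iff_nontrivial] at hs
    obtain ⟨i, j, hij⟩ := exists_pair_ne ι
    classical
    let q : FreeGroup ι →* Equiv.Perm (Fin 3) :=
      FreeGroup.lift (fun k => if k = i then Equiv.swap 0 1 else Equiv.swap 1 2)
    have hc : ∀ x y : FreeGroup ι, x * y = y * x := by
      intro x y
      let E := e.trans b.repr
      apply E.symm.injective
      simp [mul_comm]
    have := congrArg q (hc (.of i) (.of j))
    simp [q, hij.symm] at this
    revert this
    decide

/-- There is no injective group homomorphism from `ℤ × ℤ` into the free product
`ℤ ∗ (ℤ/2ℤ)` (Lemma 2 of the paper). Here groups are written multiplicatively: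
`ℤ` is `Multiplicative ℤ`, `ℤ/2ℤ` is `Multiplicative (ZMod 2)`, and the free
product is `Monoid.Coprod`. -/
theorem no_injective_hom_int_prod_int_into_freeProduct_int_zmod_two :
    ¬ ∃ f : (Multiplicative ℤ × Multiplicative ℤ) →*
        Monoid.Coprod (Multiplicative ℤ) (Multiplicative (ZMod 2)),
      Function.Injective f := by
  rintro ⟨f, hf⟩
  obtain ⟨A, B, hB⟩ := aux_semi
  let s : (Multiplicative ℤ × Multiplicative ℤ) →* (Multiplicative ℤ × Multiplicative ℤ) :=
    powMonoidHom 2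
  have hs : Function.Injective s := by
    rintro ⟨a, b⟩ ⟨c, d⟩ h
    have h1 := congrArg (fun z : Multiplicative ℤ × Multiplicative ℤ => z.1.toAdd) h
    have h2 := congrArg (fun z : Multiplicative ℤ × Multiplicative ℤ => z.2.toAdd) h
    simp [s] at h1 h2
    simp [h1, h2]
  have hT : ∀ t : Multiplicative (ZMod 2), t ^ 2 = 1 := by decide
  have hk : ∀ x, (f.comp s) x ∈ A.ker := by
    intro x
    simp [s, MonoidHom.mem_ker, hT]
  refine aux_free (B.comp ((f.comp s).codRestrict A.ker hk)) ?_
  intro x y hxy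
  have := hB hxy
  exact hs (hf (congrArg Subtype.val this))
end

section
/- Let ℓ ⊂ ℝP³ be a projective line, namely the image under Projectivization.mk of the nonzero vectors of a 2-dimensional linear subspace W of EuclideanSpace ℝ (Fin 4). Then for any basepoint x₀ in ℝP³ \ ℓ, the fundamental group π₁(ℝP³ \ ℓ, x₀) is isomorphic to the infinite cyclic group ℤ. -/
/-- The quotient topology on the projectivization, induced from the nonzero vectors. -/
instance projectivizationTopology {K V : Type*} [DivisionRing K] [AddCommGroup V]
    [Module K V] [TopologicalSpace V] : TopologicalSpace (Projectivization K V) :=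
  instTopologicalSpaceQuotient

open Topology in
theorem exists_adapted_equiv (W : Submodule ℝ (EuclideanSpace ℝ (Fin 4)))
    (hW : Module.finrank ℝ W = 2) :
    ∃ Φ : EuclideanSpace ℝ (Fin 4) ≃L[ℝ] ℂ × ℂ, ∀ v, v ∈ W ↔ (Φ v).1 = 0 := by
  obtain ⟨U, hU⟩ := W.exists_isCompl
  have hsum := Submodule.finrank_add_eq_of_isCompl hU
  have h4 : Module.finrank ℝ (EuclideanSpace ℝ (Fin 4)) = 4 := by simp
  have hUr : Module.finrank ℝ U = 2 := by omega
  have e1 : U ≃ₗ[ℝ] ℂ := LinearEquiv.ofFinrankEq _ _ (by rw [hUr, Complex.finrank_real_complex])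
  have e2 : W ≃ₗ[ℝ] ℂ := LinearEquiv.ofFinrankEq _ _ (by rw [hW, Complex.finrank_real_complex])
  let e : EuclideanSpace ℝ (Fin 4) ≃ₗ[ℝ] ℂ × ℂ :=
    (Submodule.prodEquivOfIsCompl U W hU.symm).symm.trans (LinearEquiv.prodCongr e1 e2)
  refine ⟨e.toContinuousLinearEquiv, fun v => ?_⟩
  simp [e]

theorem isOpenMap_polar : IsOpenMap
    (fun x : ℂ × ℂ => (Complex.exp x.1, Complex.exp x.1 * x.2)) := by
  let h : ℂ × ℂ ≃ₜ ℂ × ℂ :=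
    { toFun := fun x => (x.1, Complex.exp x.1 * x.2)
      invFun := fun x => (x.1, (Complex.exp x.1)⁻¹ * x.2)
      left_inv := fun x => by simp [Complex.exp_ne_zero]
      right_inv := fun x => by simp [Complex.exp_ne_zero]
      continuous_toFun := by fun_prop
      continuous_invFun := by
        have : ∀ x : ℂ × ℂ, Complex.exp x.1 ≠ 0 := fun x => Complex.exp_ne_zero _
        fun_prop (disch := simp) }
  exact (Complex.isOpenMap_exp.prodMap IsOpenMap.id).comp h.isOpenMap

open Topology in
/-- Theorem 2 of the paper, "only if" direction for the standard line: the fundamental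
group of the complement of a projective line in `ℝP³` is infinite cyclic. -/
theorem fundamentalGroup_complement_projective_line
    (W : Submodule ℝ (EuclideanSpace ℝ (Fin 4))) (hW : Module.finrank ℝ W = 2)
    (ℓ : Set (Projectivization ℝ (EuclideanSpace ℝ (Fin 4))))
    (hℓ : ℓ = {z | ∃ (v : EuclideanSpace ℝ (Fin 4)) (hv : v ≠ 0),
      v ∈ W ∧ Projectivization.mk ℝ v hv = z})
    (x₀ : {z : Projectivization ℝ (EuclideanSpace ℝ (Fin 4)) // z ∉ ℓ}) :
    Nonempty (FundamentalGroup {z : Projectivization ℝ (EuclideanSpace ℝ (Fin 4)) // z ∉ ℓ} x₀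
      ≃* Multiplicative ℤ) := by
  obtain ⟨Φ, hΦ⟩ := exists_adapted_equiv W hW
  have hmem : ∀ (v : EuclideanSpace ℝ (Fin 4)) (hv : v ≠ 0),
      Projectivization.mk ℝ v hv ∈ ℓ ↔ (Φ v).1 = 0 := by
    intro v hv
    rw [hℓ, ← hΦ]
    constructor
    · rintro ⟨w, hw, hwW, h⟩
      rw [eq_comm, Projectivization.mk_eq_mk_iff'] at h
      obtain ⟨a, rfl⟩ := h
      exact W.smul_mem a hwW
    · intro h
      exact ⟨v, hv, h, rfl⟩
  let q : {v : EuclideanSpace ℝ (Fin 4) // v ≠ 0} →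
    Projectivization ℝ (EuclideanSpace ℝ (Fin 4)) := Projectivization.mk' ℝ
  have hq : IsQuotientMap q := isQuotientMap_quotient_mk'
  have hpre : ∀ v : {v : EuclideanSpace ℝ (Fin 4) // v ≠ 0}, q v ∈ ℓᶜ ↔ (Φ v.1).1 ≠ 0 :=
    fun v => not_congr (hmem v.1 v.2)
  have hopen : IsOpen (q ⁻¹' ℓᶜ) := by
    have : q ⁻¹' ℓᶜ = (fun v : {v : EuclideanSpace ℝ (Fin 4) // v ≠ 0} => (Φ v.1).1) ⁻¹' {0}ᶜ := by
      ext v; exact hpre v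
    rw [this]
    exact isOpen_compl_singleton.preimage (by fun_prop)
  have hopen' : IsOpen (ℓᶜ) := hq.isOpen_preimage.1 hopen
  have hq' := hq.restrictPreimage_isOpen hopen'
  let g : ℂ × ℂ → EuclideanSpace ℝ (Fin 4) :=
    fun x => Φ.symm (Complex.exp x.1, Complex.exp x.1 * x.2)
  have hg : IsOpenMap g := Φ.symm.toHomeomorph.isOpenMap.comp isOpenMap_polar
  have hgc : Continuous g := Φ.symm.continuous.comp (by fun_prop)
  have hΦg : ∀ x, Φ (g x) = (Complex.exp x.1, Complex.exp x.1 * x.2) := fun x => by simp [g]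
  have hg1 : ∀ x, (Φ (g x)).1 ≠ 0 := fun x => by rw [hΦg]; exact Complex.exp_ne_zero _
  have hg0 : ∀ x, g x ≠ 0 := fun x h => hg1 x (by rw [h]; simp)
  let r : ℂ × ℂ → (q ⁻¹' ℓᶜ) := fun x => ⟨⟨g x, hg0 x⟩, (hpre _).2 (hg1 x)⟩
  have hr : IsQuotientMap r := by
    refine IsOpenMap.isQuotientMap ?_ (by fun_prop) ?_
    · exact (hg.codRestrict hg0).codRestrict _
    · rintro ⟨⟨v, hv⟩, hv'⟩
      have h1 := (hpre _).1 hv'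
      refine ⟨(Complex.log (Φ v).1, (Φ v).2 / (Φ v).1), ?_⟩
      refine Subtype.ext (Subtype.ext ?_)
      apply Φ.injective
      change Φ (g _) = _
      rw [hΦg]
      simp only [Complex.exp_log h1]
      rw [mul_div_cancel₀ _ h1]
  let F : ℂ × ℂ → {z : Projectivization ℝ (EuclideanSpace ℝ (Fin 4)) // z ∉ ℓ} :=
    ℓᶜ.restrictPreimage q ∘ r
  have hF : IsQuotientMap F := hq'.comp hr
  have hFeq : ∀ x y, F x = F y ↔ ∃ a : ℝ, a * Complex.exp y.1 = Complex.exp x.1 ∧ x.2 = y.2 := by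
    intro x y
    have : F x = F y ↔ Projectivization.mk ℝ (g x) (hg0 x) = Projectivization.mk ℝ (g y) (hg0 y) :=
      Subtype.ext_iff
    rw [this, Projectivization.mk_eq_mk_iff']
    refine exists_congr fun a => ?_
    rw [← Φ.injective.eq_iff, map_smul, hΦg, hΦg, Prod.ext_iff]
    simp only [Prod.smul_fst, Prod.smul_snd, Complex.real_smul]
    refine and_congr_right fun h => ?_
    rw [← mul_assoc, h, mul_right_inj' (Complex.exp_ne_zero _), eq_comm]
  let f : ℝ × ℂ → {z : Projectivization ℝ (EuclideanSpace ℝ (Fin 4)) // z ∉ ℓ} :=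
    fun x => F (x.1 * Complex.I, x.2)
  have hfc : Continuous f := hF.continuous.comp (by fun_prop)
  have hfF : f ∘ (fun x : ℂ × ℂ => (x.1.im, x.2)) = F := by
    ext1 x
    refine (hFeq _ _).2 ⟨Real.exp (-x.1.re), ?_, rfl⟩
    rw [Complex.ofReal_exp, ← Complex.exp_add]
    congr 1
    apply Complex.ext <;> simp
  have hf : IsQuotientMap f := by
    refine IsQuotientMap.of_comp (f := fun x : ℂ × ℂ => (x.1.im, x.2)) (by fun_prop) hfc ?_
    rw [hfF]; exact hF
  have hpi : ((Real.pi, 0) : ℝ × ℂ) ≠ 0 := fun h => Real.pi_ne_zero (congrArg Prod.fst h)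
  have hcov : IsAddQuotientCoveringMap f (AddSubgroup.zmultiples ((Real.pi, 0) : ℝ × ℂ)) := by
    refine hf.isAddQuotientCoveringMap_of_addSubgroup _
      ⟨NormedSpace.discreteTopology_zmultiples _⟩ fun {x y} => ?_
    change F _ = F _ ↔ _
    rw [hFeq, AddSubgroup.mem_zmultiples_iff]
    constructor
    · rintro ⟨a, ha, hxy⟩
      have h2 : (a : ℂ) = Complex.exp ((x.1 - y.1 : ℝ) * Complex.I) := by
        rw [Complex.ofReal_sub, sub_mul, Complex.exp_sub, ← ha,
          mul_div_cancel_right₀ _ (Complex.exp_ne_zero _)]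
      have h3 := congrArg Complex.im h2
      rw [Complex.exp_ofReal_mul_I_im, Complex.ofReal_im, eq_comm, Real.sin_eq_zero_iff] at h3
      obtain ⟨n, hn⟩ := h3
      refine ⟨-n, ?_⟩
      apply Prod.ext
      · simp; linarith
      · simp at hxy; simp [hxy]
    · rintro ⟨n, hn⟩
      have h1 := congrArg Prod.fst hn
      have h2 := congrArg Prod.snd hn
      simp at h1 h2
      refine ⟨Real.cos (x.1 - y.1), ?_, (sub_eq_zero.1 h2.symm).symm⟩
      have h3 : Real.sin (x.1 - y.1) = 0 := Real.sin_eq_zero_iff.2 ⟨-n, by push_cast; linarith⟩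
      have h4 : ((Real.cos (x.1 - y.1) : ℝ) : ℂ) = Complex.exp ((x.1 - y.1 : ℝ) * Complex.I) := by
        rw [Complex.exp_mul_I, ← Complex.ofReal_cos, ← Complex.ofReal_sin, h3]; simp
      rw [h4, ← Complex.exp_add]
      congr 1
      push_cast; ring
  obtain ⟨e, he⟩ := hf.surjective x₀
  have E1 := hcov.toMultiplicative.fundamentalGroupEquiv (x := x₀) ⟨e, he⟩
  have hinj : Function.Injective (zmultiplesHom (ℝ × ℂ) (Real.pi, 0)) := by
    intro m n h
    have := congrArg Prod.fst h
    simpa [Real.pi_ne_zero] using this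
  have E2 : ℤ ≃+ AddSubgroup.zmultiples ((Real.pi, 0) : ℝ × ℂ) :=
    AddMonoidHom.ofInjective hinj
  exact ⟨E1.trans ((AddEquiv.toMultiplicative E2).trans
    (MulEquiv.inv' _ )).symm⟩
end

section
/- Let W₁ and W₂ be 2-dimensional linear subspaces of EuclideanSpace ℝ (Fin 4) with W₁ ⊓ W₂ = {0} (equivalently, complementary subspaces), and let ℓ₁ and ℓ₂ be the corresponding projective lines in ℝP³ (the images under Projectivization.mk of the nonzero vectors of W₁ and of W₂). Then ℓ₁ and ℓ₂ are disjoint, and for any basepoint x₀ in ℝP³ \ (ℓ₁ ∪ ℓ₂), the fundamental group π₁(ℝP³ \ (ℓ₁ ∪ ℓ₂), x₀) is isomorphic to the free abelian group ℤ × ℤ. -/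
open Complex Topology

local notation "V4" => EuclideanSpace ℝ (Fin 4)

lemma skew_exists_equiv (W₁ W₂ : Submodule ℝ V4)
    (hW₁ : Module.finrank ℝ W₁ = 2) (hW₂ : Module.finrank ℝ W₂ = 2)
    (hW : W₁ ⊓ W₂ = ⊥) :
    ∃ e : V4 ≃L[ℝ] ℂ × ℂ, (∀ v, v ∈ W₁ ↔ (e v).2 = 0) ∧ (∀ v, v ∈ W₂ ↔ (e v).1 = 0) := by
  have hc : IsCompl W₁ W₂ := by
    refine IsCompl.of_eq hW ?_
    apply Submodule.eq_top_of_finrank_eq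
    have := Submodule.finrank_sup_add_finrank_inf_eq W₁ W₂
    rw [hW, finrank_bot] at this
    rw [finrank_euclideanSpace, Fintype.card_fin]
    omega
  let a : W₁ ≃ₗ[ℝ] ℂ := LinearEquiv.ofFinrankEq _ _ (by rw [hW₁, Complex.finrank_real_complex])
  let b : W₂ ≃ₗ[ℝ] ℂ := LinearEquiv.ofFinrankEq _ _ (by rw [hW₂, Complex.finrank_real_complex])
  let e := (Submodule.prodEquivOfIsCompl W₁ W₂ hc).symm.trans (a.prodCongr b)
  refine ⟨e.toContinuousLinearEquiv, fun v => ?_, fun v => ?_⟩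
  · rw [← Submodule.prodEquivOfIsCompl_symm_apply_snd_eq_zero W₁ W₂ hc]
    exact (map_eq_zero_iff b b.injective).symm
  · rw [← Submodule.prodEquivOfIsCompl_symm_apply_fst_eq_zero W₁ W₂ hc]
    exact (map_eq_zero_iff a a.injective).symm

lemma skew_isOpenMap_mk' : IsOpenMap (Projectivization.mk' ℝ (V := V4)) := by
  intro U hU
  change IsOpen (Projectivization.mk' ℝ ⁻¹' (Projectivization.mk' ℝ '' U))
  have : Projectivization.mk' ℝ ⁻¹' (Projectivization.mk' ℝ '' U) =
      ⋃ t : ℝˣ, (fun v : {v : V4 // v ≠ 0} =>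
        (⟨t • v.1, (smul_ne_zero_iff_ne t).2 v.2⟩ : {v : V4 // v ≠ 0})) ⁻¹' U := by
    ext v
    simp only [Set.mem_preimage, Set.mem_image, Set.mem_iUnion]
    constructor
    · rintro ⟨w, hw, h⟩
      rw [Projectivization.mk'_eq_mk, Projectivization.mk'_eq_mk,
        Projectivization.mk_eq_mk_iff] at h
      obtain ⟨t, ht⟩ := h
      refine ⟨t, ?_⟩
      convert hw
    · rintro ⟨t, ht⟩
      refine ⟨_, ht, ?_⟩
      rw [Projectivization.mk'_eq_mk, Projectivization.mk'_eq_mk,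
        Projectivization.mk_eq_mk_iff]
      exact ⟨t, rfl⟩
  rw [this]
  refine isOpen_iUnion fun t => hU.preimage ?_
  exact (continuous_subtype_val.const_smul t).subtype_mk _

/-- the deck group -/
noncomputable def skewHom : ℤ × ℤ →+ ℝ × ℂ where
  toFun n := (n.1 * Real.pi, n.2 * (2 * Real.pi * I))
  map_zero' := by simp
  map_add' a b := by ext <;> simp <;> ring

lemma skewHom_injective : Function.Injective skewHom := by
  rintro ⟨a, b⟩ ⟨c, d⟩ h
  have h1 := congrArg Prod.fst h
  have h2 := congrArg Prod.snd h
  simp only [skewHom, AddMonoidHom.coe_mk, ZeroHom.coe_mk] at h1 h2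
  have h1' := mul_right_cancel₀ Real.pi_ne_zero h1
  have h2' := mul_right_cancel₀ Complex.two_pi_I_ne_zero h2
  exact Prod.ext (by exact_mod_cast h1') (by exact_mod_cast h2')

lemma skewHom_discrete : IsDiscrete (skewHom.range : Set (ℝ × ℂ)) := by
  have h1 : IsDiscrete (AddSubgroup.zmultiples Real.pi : Set ℝ) :=
    ⟨NormedSpace.discreteTopology_zmultiples _⟩
  have h2 : IsDiscrete (AddSubgroup.zmultiples (2 * Real.pi * I) : Set ℂ) :=
    ⟨NormedSpace.discreteTopology_zmultiples _⟩
  have h3 : IsDiscrete ((AddSubgroup.zmultiples Real.pi : Set ℝ) ×ˢ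
      (AddSubgroup.zmultiples (2 * Real.pi * I) : Set ℂ)) := by
    have := h1.to_subtype
    have := h2.to_subtype
    exact ⟨(Homeomorph.Set.prod _ _).symm.discreteTopology⟩
  refine h3.mono ?_
  rintro _ ⟨n, rfl⟩
  exact ⟨⟨n.1, by simp [skewHom]⟩, ⟨n.2, by simp [skewHom]⟩⟩

lemma skew_fiber (a b : ℝ) (u v : ℂ) :
    (∃ t : ℝ, (t : ℂ) * exp (b * I) = exp (a * I) ∧ (t : ℂ) * exp (b * I + v) = exp (a * I + u)) ↔
      (b, v) + -(a, u) ∈ skewHom.range := by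
  constructor
  · rintro ⟨t, h1, h2⟩
    have h3 : exp v = exp u := by
      rw [exp_add, exp_add, ← mul_assoc, h1] at h2
      exact mul_left_cancel₀ (exp_ne_zero _) h2
    obtain ⟨m, hm⟩ := exp_eq_exp_iff_exists_int.1 h3
    have h4 : exp (((a - b : ℝ) : ℂ) * I) = t := by
      rw [ofReal_sub, sub_mul, exp_sub, ← h1, mul_div_cancel_right₀ _ (exp_ne_zero _)]
    have h5 : Real.sin (a - b) = 0 := by
      have := congrArg Complex.im h4
      rwa [exp_ofReal_mul_I_im, ofReal_im] at this
    obtain ⟨n, hn⟩ := Real.sin_eq_zero_iff.1 h5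
    refine ⟨(-n, m), ?_⟩
    ext1
    · simp [skewHom]; linarith
    · simp [skewHom, hm]
  · rintro ⟨⟨n, m⟩, h⟩
    have h1 := congrArg Prod.fst h
    have h2 := congrArg Prod.snd h
    simp [skewHom] at h1 h2
    have h3 : exp v = exp u := exp_eq_exp_iff_exists_int.2 ⟨m, by rw [h2]; ring⟩
    have h5 : Real.sin (a - b) = 0 := Real.sin_eq_zero_iff.2 ⟨-n, by push_cast; linarith⟩
    have h4 : exp (((a - b : ℝ) : ℂ) * I) = Real.cos (a - b) := by
      apply Complex.ext
      · rw [exp_ofReal_mul_I_re, ofReal_re]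
      · rw [exp_ofReal_mul_I_im, ofReal_im, h5]
    have h6 : (Real.cos (a - b) : ℂ) * exp (b * I) = exp (a * I) := by
      rw [← h4, ← exp_add]; congr 1; push_cast; ring
    exact ⟨Real.cos (a - b), h6, by rw [exp_add, exp_add, ← mul_assoc, h6, h3]⟩

section
variable (e : V4 ≃L[ℝ] ℂ × ℂ)

lemma skew_symm_ne (z w : ℂ) : e.symm (exp z, exp w) ≠ 0 := by
  simp [Prod.ext_iff]

/-- the covering map, before corestricting -/
noncomputable def skewMap (x : ℝ × ℂ) : Projectivization ℝ V4 :=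
  Projectivization.mk' ℝ ⟨e.symm (exp (x.1 * I), exp (x.1 * I + x.2)), skew_symm_ne e _ _⟩

lemma skewMap_continuous : Continuous (skewMap e) := by
  have h : Continuous (Projectivization.mk' ℝ (V := V4)) := continuous_quot_mk
  refine h.comp (Continuous.subtype_mk ?_ _)
  exact e.symm.continuous.comp (by fun_prop)

lemma skewMap_isOpenMap : IsOpenMap (skewMap e) := by
  intro U hU
  let F : ℂ × ℂ → {v : V4 // v ≠ 0} := fun x => ⟨e.symm (exp x.1, exp x.2), skew_symm_ne e _ _⟩
  have hF : IsOpenMap F := by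
    refine (IsOpen.isOpenEmbedding_subtypeVal isClosed_singleton.1).isOpenMap_iff.mpr ?_
    exact e.symm.toHomeomorph.isOpenMap.comp (isOpenMap_exp.prodMap isOpenMap_exp)
  let g : ℂ × ℂ → ℝ × ℂ := fun x => (x.1.im, x.2 - x.1)
  have hg : Continuous g := by fun_prop
  have : skewMap e '' U = Projectivization.mk' ℝ '' (F '' (g ⁻¹' U)) := by
    ext z
    constructor
    · rintro ⟨⟨a, u⟩, hx, rfl⟩
      refine ⟨_, ⟨(a * I, a * I + u), ?_, rfl⟩, rfl⟩
      simpa [g] using hx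
    · rintro ⟨_, ⟨⟨x, y⟩, hx, rfl⟩, rfl⟩
      refine ⟨_, hx, ?_⟩
      rw [skewMap, Projectivization.mk'_eq_mk, Projectivization.mk'_eq_mk,
        Projectivization.mk_eq_mk_iff']
      refine ⟨Real.exp (-x.re), ?_⟩
      simp only [F, g, ← map_smul, Prod.smul_mk, real_smul, ofReal_exp, ← exp_add]
      have hx := re_add_im x
      refine congrArg e.symm (Prod.ext ?_ ?_)
      · change exp _ = exp _
        congr 1; push_cast; linear_combination -hx
      · change exp _ = exp _
        congr 1; push_cast; linear_combination -hx
  rw [this]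
  exact skew_isOpenMap_mk' _ (hF _ (hU.preimage hg))

lemma skewMap_eq_iff {x y : ℝ × ℂ} : skewMap e x = skewMap e y ↔ y + -x ∈ skewHom.range := by
  obtain ⟨a, u⟩ := x
  obtain ⟨b, v⟩ := y
  rw [← skew_fiber, skewMap, skewMap, Projectivization.mk'_eq_mk, Projectivization.mk'_eq_mk,
        Projectivization.mk_eq_mk_iff']
  refine exists_congr fun t => ?_
  rw [← map_smul, e.symm.injective.eq_iff]
  simp [Prod.ext_iff]

lemma skewMap_range (z : Projectivization ℝ V4) :
    (∃ x, skewMap e x = z) ↔ (∀ (v : V4) (hv : v ≠ 0), Projectivization.mk ℝ v hv = z →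
      (e v).1 ≠ 0 ∧ (e v).2 ≠ 0) := by
  constructor
  · rintro ⟨x, rfl⟩ v hv h
    rw [skewMap, Projectivization.mk'_eq_mk, Projectivization.mk_eq_mk_iff] at h
    obtain ⟨t, rfl⟩ := h
    simp [Units.smul_def]
  · intro h
    induction z using Projectivization.ind with
    | h v hv =>
    obtain ⟨h1, h2⟩ := h v hv rfl
    refine ⟨((log (e v).1).im, log (e v).2 - log (e v).1), ?_⟩
    rw [skewMap, Projectivization.mk'_eq_mk, Projectivization.mk_eq_mk_iff']
    refine ⟨Real.exp (-(log (e v).1).re), ?_⟩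
    rw [e.eq_symm_apply, map_smul]
    have hx := re_add_im (log (e v).1)
    ext1
    · simp only [Prod.smul_fst, real_smul, ofReal_exp]
      conv_lhs => arg 2; rw [← exp_log h1]
      rw [← exp_add]
      congr 1; push_cast; linear_combination -hx
    · simp only [Prod.smul_snd, real_smul, ofReal_exp]
      conv_lhs => rw [← exp_log h2]
      rw [← exp_add]
      congr 1; push_cast; linear_combination -hx

end

/-- The link `1₁²` of two skew projective lines in `ℝP³`: the two lines are disjoint and
the fundamental group of their complement is free abelian of rank two. -/
theorem fundamentalGroup_complement_two_skew_lines
    (W₁ W₂ : Submodule ℝ (EuclideanSpace ℝ (Fin 4)))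
    (hW₁ : Module.finrank ℝ W₁ = 2) (hW₂ : Module.finrank ℝ W₂ = 2)
    (hW : W₁ ⊓ W₂ = ⊥)
    (ℓ₁ ℓ₂ : Set (Projectivization ℝ (EuclideanSpace ℝ (Fin 4))))
    (hℓ₁ : ℓ₁ = {z | ∃ (v : EuclideanSpace ℝ (Fin 4)) (hv : v ≠ 0),
      v ∈ W₁ ∧ Projectivization.mk ℝ v hv = z})
    (hℓ₂ : ℓ₂ = {z | ∃ (v : EuclideanSpace ℝ (Fin 4)) (hv : v ≠ 0),
      v ∈ W₂ ∧ Projectivization.mk ℝ v hv = z}) :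
    ℓ₁ ∩ ℓ₂ = ∅ ∧
    ∀ x₀ : {z : Projectivization ℝ (EuclideanSpace ℝ (Fin 4)) // z ∉ ℓ₁ ∪ ℓ₂},
      Nonempty
        (FundamentalGroup {z : Projectivization ℝ (EuclideanSpace ℝ (Fin 4)) // z ∉ ℓ₁ ∪ ℓ₂} x₀
          ≃* Multiplicative ℤ × Multiplicative ℤ) := by
  obtain ⟨e, he1, he2⟩ := skew_exists_equiv W₁ W₂ hW₁ hW₂ hW
  subst hℓ₁ hℓ₂
  constructor
  · rw [Set.eq_empty_iff_forall_notMem]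
    rintro z ⟨⟨v, hv, hv1, rfl⟩, ⟨w, hw, hw2, h⟩⟩
    rw [Projectivization.mk_eq_mk_iff] at h
    obtain ⟨t, ht⟩ := h
    have h2 : v ∈ W₂ := (Submodule.smul_mem_iff_of_isUnit W₂ t.isUnit).1 (ht ▸ hw2)
    have : v ∈ W₁ ⊓ W₂ := ⟨hv1, h2⟩
    rw [hW] at this
    exact hv ((Submodule.mem_bot ℝ).1 this)
  · intro x₀
    have hmem : ∀ z : Projectivization ℝ V4, (∃ x, skewMap e x = z) ↔ z ∉
        {z | ∃ (v : V4) (hv : v ≠ 0), v ∈ W₁ ∧ Projectivization.mk ℝ v hv = z} ∪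
        {z | ∃ (v : V4) (hv : v ≠ 0), v ∈ W₂ ∧ Projectivization.mk ℝ v hv = z} := by
      intro z
      rw [skewMap_range]
      simp only [Set.mem_union, Set.mem_ofPred_eq, he1, he2, not_or, not_exists, not_and]
      constructor
      · intro h
        exact ⟨fun v hv h1 h2 => (h v hv h2).2 h1, fun v hv h1 h2 => (h v hv h2).1 h1⟩
      · rintro ⟨h1, h2⟩ v hv h
        exact ⟨fun h' => h2 v hv h' h, fun h' => h1 v hv h' h⟩
    let p : ℝ × ℂ → {z : Projectivization ℝ V4 // z ∉
        {z | ∃ (v : V4) (hv : v ≠ 0), v ∈ W₁ ∧ Projectivization.mk ℝ v hv = z} ∪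
        {z | ∃ (v : V4) (hv : v ≠ 0), v ∈ W₂ ∧ Projectivization.mk ℝ v hv = z}} :=
      fun x => ⟨skewMap e x, (hmem _).1 ⟨x, rfl⟩⟩
    have hsurj : Function.Surjective p := fun z => by
      obtain ⟨x, hx⟩ := (hmem z.1).2 z.2
      exact ⟨x, Subtype.ext hx⟩
    have hq : IsQuotientMap p := by
      refine IsOpenMap.isQuotientMap ?_ ((skewMap_continuous e).subtype_mk _) hsurj
      intro U hU
      have : p '' U = Subtype.val ⁻¹' (skewMap e '' U) := by
        ext z
        simp [p, Subtype.ext_iff]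
      rw [this]
      exact (skewMap_isOpenMap e U hU).preimage continuous_subtype_val
    have hp := hq.isAddQuotientCoveringMap_of_addSubgroup skewHom.range skewHom_discrete
      (fun {x y} => by rw [← skewMap_eq_iff e]; exact Subtype.ext_iff)
    obtain ⟨x, hx⟩ := hsurj x₀
    have E1 := hp.fundamentalGroupEquiv (⟨x, hx⟩ : p ⁻¹' {x₀})
    have E2 : Multiplicative (ℤ × ℤ) ≃* Multiplicative skewHom.range :=
      (AddMonoidHom.ofInjective skewHom_injective).toMultiplicative
    have E3 : Multiplicative skewHom.range ≃* (Multiplicative skewHom.range)ᵐᵒᵖ :=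
      MulOpposite.opMulEquiv
    exact ⟨E1.trans (E3.symm.trans (E2.symm.trans (MulEquiv.prodMultiplicative ℤ ℤ)))⟩
end

section
/- Let x be a point of ℝP³. Then the complement ℝP³ \ {x} (with the subspace topology) is homotopy equivalent to the real projective plane ℝP². In fact, for any 3-dimensional linear subspace W of EuclideanSpace ℝ (Fin 4) whose projectivization H does not contain x, the subspace H is a deformation retract of ℝP³ \ {x}, via the projection from x. -/
open Projectivization in
theorem aux_openQuot {V : Type*} [NormedAddCommGroup V] [NormedSpace ℝ V] :
    IsOpenQuotientMap (Projectivization.mk' ℝ : {v : V // v ≠ 0} → Projectivization ℝ V) := by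
  refine ⟨fun z => ⟨⟨z.rep, z.rep_nonzero⟩, z.mk_rep⟩, continuous_quotient_mk', ?_⟩
  intro s hs
  have hq : Topology.IsQuotientMap
      (Projectivization.mk' ℝ : {v : V // v ≠ 0} → Projectivization ℝ V) :=
    isQuotientMap_quotient_mk'
  rw [← hq.isOpen_preimage]
  have : Projectivization.mk' ℝ ⁻¹' (Projectivization.mk' ℝ '' s) =
      ⋃ a : ℝˣ, (fun v : {v : V // v ≠ 0} =>
        (⟨a • (v : V), by simpa [Units.smul_def] using v.2⟩ : {v : V // v ≠ 0})) ⁻¹' s := by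
    ext v
    simp only [Set.mem_preimage, Set.mem_image, Set.mem_iUnion]
    constructor
    · rintro ⟨w, hw, h⟩
      obtain ⟨a, ha⟩ := (mk_eq_mk_iff ℝ _ _ w.2 v.2).1 h
      refine ⟨a, ?_⟩
      convert hw
    · rintro ⟨a, ha⟩
      exact ⟨_, ha, (mk_eq_mk_iff ℝ _ _ _ v.2).2 ⟨a, rfl⟩⟩
  rw [this]
  refine isOpen_iUnion fun a => hs.preimage ?_
  refine Continuous.subtype_mk ?_ _
  exact continuous_subtype_val.const_smul (a : ℝ)

open Projectivization in
theorem aux_mk_rep {V V' : Type*} [AddCommGroup V] [Module ℝ V] [AddCommGroup V'] [Module ℝ V']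
    (L : V →ₗ[ℝ] V') (v : V) (hv : v ≠ 0) (h : L (mk ℝ v hv).rep ≠ 0) :
    ∃ h' : L v ≠ 0, mk ℝ (L (mk ℝ v hv).rep) h = mk ℝ (L v) h' := by
  obtain ⟨a, ha⟩ := exists_smul_eq_mk_rep ℝ v hv
  have e : L (mk ℝ v hv).rep = a • L v := by
    rw [← ha, Units.smul_def, map_smul, Units.smul_def]
  refine ⟨fun h0 => h (by rw [e, h0, smul_zero]), ?_⟩
  exact (mk_eq_mk_iff ℝ _ _ _ _).2 ⟨a, e.symm⟩

open Projectivization in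
theorem aux_cont {T V V' : Type*} [TopologicalSpace T] [NormedAddCommGroup V] [NormedSpace ℝ V]
    [NormedAddCommGroup V'] [NormedSpace ℝ V'] (U : Set (Projectivization ℝ V))
    (L : T → V →ₗ[ℝ] V') (hL : Continuous fun p : T × V => L p.1 p.2)
    (hne : ∀ t, ∀ z ∈ U, L t z.rep ≠ 0) :
    Continuous fun p : T × U => mk ℝ (L p.1 (p.2 : Projectivization ℝ V).rep)
      (hne p.1 p.2 p.2.2) := by
  have hq := (IsOpenQuotientMap.id (X := T)).prodMap
    ((aux_openQuot (V := V)).restrictPreimage U)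
  rw [← hq.continuous_comp_iff]
  have hne' : ∀ p : T × (mk' ℝ ⁻¹' U : Set {v : V // v ≠ 0}), L p.1 (p.2 : {v : V // v ≠ 0}) ≠ 0 :=
    fun p => (aux_mk_rep (L p.1) _ p.2.1.2 (hne p.1 _ p.2.2)).1
  have : Continuous fun p : T × (mk' ℝ ⁻¹' U : Set {v : V // v ≠ 0}) =>
      mk' ℝ (⟨L p.1 (p.2 : {v : V // v ≠ 0}), hne' p⟩ : {v : V' // v ≠ 0}) := by
    refine aux_openQuot.continuous.comp (Continuous.subtype_mk ?_ _)
    exact hL.comp (continuous_fst.prodMk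
      (continuous_subtype_val.comp (continuous_subtype_val.comp continuous_snd)))
  convert this using 2 with p
  exact (aux_mk_rep (L p.1) _ p.2.1.2 (hne p.1 _ p.2.2)).2

open Projectivization in
theorem aux_cont1 {V V' : Type*} [NormedAddCommGroup V] [NormedSpace ℝ V]
    [NormedAddCommGroup V'] [NormedSpace ℝ V'] (U : Set (Projectivization ℝ V))
    (L : V →ₗ[ℝ] V') (hL : Continuous L)
    (hne : ∀ z ∈ U, L z.rep ≠ 0) :
    Continuous fun p : U => mk ℝ (L (p : Projectivization ℝ V).rep) (hne p p.2) :=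
  (aux_cont (T := Unit) U (fun _ => L) (hL.comp continuous_snd) (fun _ => hne)).comp
    (continuous_const.prodMk continuous_id : Continuous fun z : U => ((), z))

open Projectivization in
theorem aux_ne {V : Type*} [AddCommGroup V] [Module ℝ V]
    (P : V →ₗ[ℝ] V) (x : Projectivization ℝ V) (hx : P x.rep = 0) (v : V) (hv : v ≠ 0)
    (h : P v ≠ 0) : mk ℝ v hv ≠ x := by
  rintro rfl
  obtain ⟨a, ha⟩ := exists_smul_eq_mk_rep ℝ v hv
  rw [← ha, Units.smul_def, map_smul] at hx
  exact h ((smul_eq_zero.1 hx).resolve_left a.ne_zero)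

open Projectivization in
theorem aux_main {V : Type*} [NormedAddCommGroup V] [NormedSpace ℝ V]
    (P : V →ₗ[ℝ] V) (hP : Continuous P) (x : Projectivization ℝ V)
    (hx : P x.rep = 0) (hne : ∀ z, z ≠ x → P z.rep ≠ 0) (hPP : ∀ v, P (P v) = P v) :
    ∃ r : C({z : Projectivization ℝ V // z ≠ x}, {z : Projectivization ℝ V // z ≠ x}),
      (∀ z : {z : Projectivization ℝ V // z ≠ x}, (r z : Projectivization ℝ V) =
        mk ℝ (P (z : Projectivization ℝ V).rep) (hne z z.2)) ∧
      ContinuousMap.HomotopicRel (ContinuousMap.id _) r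
        {z | P (z : Projectivization ℝ V).rep = (z : Projectivization ℝ V).rep} := by
  have hPne : ∀ z, z ≠ x → P (P z.rep) ≠ 0 := fun z hz => by rw [hPP]; exact hne z hz
  let r : C({z : Projectivization ℝ V // z ≠ x}, {z : Projectivization ℝ V // z ≠ x}) :=
    ⟨fun z => ⟨mk ℝ (P (z : Projectivization ℝ V).rep) (hne z z.2),
      aux_ne P x hx _ _ (hPne z z.2)⟩,
      Continuous.subtype_mk (aux_cont1 {z | z ≠ x} P hP hne) _⟩
  let L : unitInterval → V →ₗ[ℝ] V := fun t => (1 - (t : ℝ)) • LinearMap.id + (t : ℝ) • P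
  have hLP : ∀ t v, P (L t v) = P v := fun t v => by
    simp only [L, LinearMap.add_apply, LinearMap.smul_apply, LinearMap.id_apply, map_add,
      map_smul, hPP]
    rw [← add_smul]; simp
  have hLne : ∀ t, ∀ z ∈ {z : Projectivization ℝ V | z ≠ x}, L t z.rep ≠ 0 := by
    intro t z hz h0
    apply hne z hz
    rw [← hLP t, h0, map_zero]
  have hLc : Continuous fun p : unitInterval × V => L p.1 p.2 := by
    simp only [L, LinearMap.add_apply, LinearMap.smul_apply, LinearMap.id_apply]
    fun_prop
  refine ⟨r, fun z => rfl, ⟨⟨⟨⟨fun p => ⟨mk ℝ (L p.1 (p.2 : Projectivization ℝ V).rep)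
    (hLne p.1 p.2 p.2.2), aux_ne P x hx _ _ ?_⟩, ?_⟩, ?_, ?_⟩, ?_⟩⟩⟩
  · rw [hLP]; exact hne _ p.2.2
  · exact Continuous.subtype_mk (aux_cont {z | z ≠ x} L hLc hLne) _
  · intro z
    apply Subtype.ext
    simp [L]
  · intro z
    apply Subtype.ext
    simp [L, r]
  · intro t z hz
    apply Subtype.ext
    have hz' : P (z : Projectivization ℝ V).rep = (z : Projectivization ℝ V).rep := hz
    have : L t (z : Projectivization ℝ V).rep = (z : Projectivization ℝ V).rep := by
      simp only [L, LinearMap.add_apply, LinearMap.smul_apply, LinearMap.id_apply, hz']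
      rw [← add_smul]; simp
    simp [this]

open Projectivization in
theorem aux_P {V : Type*} [NormedAddCommGroup V] [NormedSpace ℝ V] 
    (x : Projectivization ℝ V) (W : Submodule ℝ V) (h : IsCompl W (Submodule.span ℝ {x.rep})) :
    ∃ P : V →ₗ[ℝ] W, P x.rep = 0 ∧ (∀ z, z ≠ x → P z.rep ≠ 0) ∧ (∀ w : W, P w = w) := by
  refine ⟨W.projectionOnto _ h, ?_, ?_, ?_⟩
  · rw [Submodule.projectionOnto_apply_eq_zero_iff]
    exact Submodule.mem_span_singleton_self _
  · intro z hz h0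
    rw [Submodule.projectionOnto_apply_eq_zero_iff, Submodule.mem_span_singleton] at h0
    apply hz
    rw [← z.mk_rep, ← x.mk_rep, mk_eq_mk_iff']
    exact h0
  · exact Submodule.projectionOnto_apply_left h


/-- The complement of a point `x` in `ℝP³` is homotopy equivalent to `ℝP²`; in fact any
projective plane `H ⊂ ℝP³` not containing `x` is a (strong) deformation retract of
`ℝP³ \ {x}`. -/
theorem complement_point_homotopyEquiv_projective_plane
    (x : Projectivization ℝ (EuclideanSpace ℝ (Fin 4))) :
    Nonempty
      (ContinuousMap.HomotopyEquiv
        {z : Projectivization ℝ (EuclideanSpace ℝ (Fin 4)) // z ≠ x}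
        (Projectivization ℝ (EuclideanSpace ℝ (Fin 3)))) ∧
    ∀ (W : Submodule ℝ (EuclideanSpace ℝ (Fin 4))), Module.finrank ℝ W = 3 →
      ∀ H : Set (Projectivization ℝ (EuclideanSpace ℝ (Fin 4))),
        H = {z | ∃ (v : EuclideanSpace ℝ (Fin 4)) (hv : v ≠ 0),
          v ∈ W ∧ Projectivization.mk ℝ v hv = z} →
        x ∉ H →
        ∃ r : C({z : Projectivization ℝ (EuclideanSpace ℝ (Fin 4)) // z ≠ x},
                {z : Projectivization ℝ (EuclideanSpace ℝ (Fin 4)) // z ≠ x}),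
          (∀ z, (r z : Projectivization ℝ (EuclideanSpace ℝ (Fin 4))) ∈ H) ∧
          (∀ z : {z : Projectivization ℝ (EuclideanSpace ℝ (Fin 4)) // z ≠ x},
            (z : Projectivization ℝ (EuclideanSpace ℝ (Fin 4))) ∈ H → r z = z) ∧
          ContinuousMap.HomotopicRel (ContinuousMap.id _) r
            {z | (z : Projectivization ℝ (EuclideanSpace ℝ (Fin 4))) ∈ H} := by
  classical
  constructor
  · obtain ⟨W, hW⟩ := Submodule.exists_isCompl (Submodule.span ℝ {x.rep})
    have hd : Module.finrank ℝ W = Module.finrank ℝ (EuclideanSpace ℝ (Fin 3)) := by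
      have h1 := Submodule.finrank_add_eq_of_isCompl hW
      rw [finrank_span_singleton x.rep_nonzero] at h1
      simp only [finrank_euclideanSpace, Fintype.card_fin] at h1 ⊢
      omega
    obtain ⟨P, hPx, hPne, hPw⟩ := aux_P x W hW.symm
    let e : W ≃ₗ[ℝ] EuclideanSpace ℝ (Fin 3) := LinearEquiv.ofFinrankEq _ _ hd
    let Q := W.subtype ∘ₗ P
    have hQx : Q x.rep = 0 := by simp [Q, hPx]
    obtain ⟨r, hr, hrel⟩ := aux_main Q Q.continuous_of_finiteDimensional x hQx
      (fun z hz => by simpa [Q] using hPne z hz) (fun v => by simp [Q, hPw])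
    let F := e.toLinearMap ∘ₗ P
    let G := W.subtype ∘ₗ e.symm.toLinearMap
    have hF : ∀ z, z ≠ x → F z.rep ≠ 0 := fun z hz => by simpa [F] using hPne z hz
    have hG : ∀ v, v ≠ 0 → G v ≠ 0 := fun v hv => by simpa [G] using hv
    have hGr : ∀ z : Projectivization ℝ (EuclideanSpace ℝ (Fin 3)), G z.rep ≠ 0 :=
      fun z => hG _ z.rep_nonzero
    have hFG : ∀ v, F (G v) = v := fun v => by simp [F, G, hPw]
    have hGF : ∀ v, G (F v) = Q v := fun v => by simp [F, G, Q]
    have hQG : ∀ v, Q (G v) = G v := fun v => by rw [← hGF, hFG]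
    have hGc : Continuous fun z : Projectivization ℝ (EuclideanSpace ℝ (Fin 3)) =>
        Projectivization.mk ℝ (G z.rep) (hGr z) :=
      (aux_cont1 Set.univ G G.continuous_of_finiteDimensional (fun z _ => hGr z)).comp
        (Continuous.subtype_mk continuous_id fun _ => Set.mem_univ _)
    let f : C({z : Projectivization ℝ (EuclideanSpace ℝ (Fin 4)) // z ≠ x},
        Projectivization ℝ (EuclideanSpace ℝ (Fin 3))) :=
      ⟨fun z => Projectivization.mk ℝ (F (z : Projectivization ℝ (EuclideanSpace ℝ (Fin 4))).rep)
        (hF z z.2), aux_cont1 {z | z ≠ x} F F.continuous_of_finiteDimensional hF⟩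
    let g : C(Projectivization ℝ (EuclideanSpace ℝ (Fin 3)),
        {z : Projectivization ℝ (EuclideanSpace ℝ (Fin 4)) // z ≠ x}) :=
      ⟨fun z => ⟨Projectivization.mk ℝ (G z.rep) (hGr z),
        aux_ne Q x hQx _ _ (by rw [hQG]; exact hGr z)⟩, Continuous.subtype_mk hGc _⟩
    have hgf : g.comp f = r := by
      ext z : 1
      apply Subtype.ext
      rw [hr]
      refine ((aux_mk_rep G _ (hF z z.2) (hGr _)).2).trans ?_
      congr 1
      exact hGF _
    have hfg : f.comp g = ContinuousMap.id _ := by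
      ext z : 1
      refine ((aux_mk_rep F _ (hGr z) (hF _ (g z).2)).2).trans ?_
      refine Eq.trans ?_ z.mk_rep
      congr 1
      exact hFG _
    refine ⟨⟨f, g, ?_, ?_⟩⟩
    · rw [hgf]
      obtain ⟨h⟩ := hrel
      exact ⟨h.toHomotopy.symm⟩
    · rw [hfg]
  · rintro W hd H rfl hxH
    have hxW : x.rep ∉ W := fun h => hxH ⟨x.rep, x.rep_nonzero, h, x.mk_rep⟩
    have hW : IsCompl W (Submodule.span ℝ {x.rep}) := by
      rw [Submodule.isCompl_iff_disjoint]
      · rw [Submodule.disjoint_span_singleton' x.rep_nonzero]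
        exact hxW
      · rw [finrank_span_singleton x.rep_nonzero, hd]
        simp
    obtain ⟨P, hPx, hPne, hPw⟩ := aux_P x W hW
    let Q := W.subtype ∘ₗ P
    have hQx : Q x.rep = 0 := by simp [Q, hPx]
    obtain ⟨r, hr, hrel⟩ := aux_main Q Q.continuous_of_finiteDimensional x hQx
      (fun z hz => by simpa [Q] using hPne z hz) (fun v => by simp [Q, hPw])
    have key : ∀ z ∈ {z | ∃ (v : EuclideanSpace ℝ (Fin 4)) (hv : v ≠ 0),
          v ∈ W ∧ Projectivization.mk ℝ v hv = z}, Q z.rep = z.rep := by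
      rintro z ⟨v, hv, hvW, rfl⟩
      obtain ⟨a, ha⟩ := Projectivization.exists_smul_eq_mk_rep ℝ v hv
      have hm : (Projectivization.mk ℝ v hv).rep ∈ W := by
        rw [← ha]
        exact W.smul_mem (a : ℝ) hvW
      exact congrArg Subtype.val (hPw ⟨_, hm⟩)
    refine ⟨r, fun z => ?_, fun z hz => ?_, ?_⟩
    · rw [hr]
      exact ⟨_, _, (P _).2, rfl⟩
    · apply Subtype.ext
      rw [hr]
      refine Eq.trans ?_ (Projectivization.mk_rep z.1)
      congr 1
      exact key _ hz
    · obtain ⟨h⟩ := hrel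
      exact ⟨⟨h.toHomotopy, fun t z hz => h.prop' t z (key _ hz)⟩⟩
end
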